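/- Assume (A) and (B) hold with p = 1, i.e., G has a unique non-degenerate global maximizer M = M_1 in the interior of Δ̂. Let ρ be the probability measure on {1,…,q} with ρ(l) = M_{1,l} for l = 1,…,q. Then there exists a constant c > 0 such that for all N and all 1 ≤ k ≤ N, the k-marginal μ_N^{(k)} (the distribution of (σ_1,…,σ_k) under μ_N) satisfies H(μ_N^{(k)} | ρ^{⊗k}) ≤ c k / N. -/

import Mathlib

/-!
The relative entropy of the marginals is controlled by that of the whole measure, and the latter
is bounded uniformly in `N`.

**Reduction to the full measure.** Cut `{1, …, N}` into `⌊N / k⌋` disjoint blocks of length `k`.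
Each block of an exchangeable law `μ_N` is distributed as `μ_N^{(k)}`, so Gibbs' inequality
(`gibbs_inequality`) applied to `μ_N` and to the product over the blocks of `μ_N^{(k)}`, completed
by `ρ` on the leftover sites, gives `⌊N / k⌋ H(μ_N^{(k)} | ρ^{⊗k}) ≤ H(μ_N | ρ^{⊗N})`. As
`⌊N / k⌋ ≥ N / (2k)`, a bound `H(μ_N | ρ^{⊗N}) ≤ C` yields `H(μ_N^{(k)} | ρ^{⊗k}) ≤ 2 C k / N`
(`relEnt_marginal_le`).

**The full measure** (`relEnt_gibbs_bounded`). One has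
`H(μ_N | ρ^{⊗N}) = E_{μ_N}[N (G(m) + KL(m | ρ))] - log Z_N`, writing `G` for `F + ent`.
* The Gibbs variational principle tested with `ρ^{⊗N}` gives `log Z_N ≥ N G(M) - A`, because `F` is
  bounded below by its linearization at `ρ` minus a quadratic, and the empirical magnetization under
  `ρ^{⊗N}` has mean `ρ` and covariance of order `1 / N`.
* `G(m) ≤ G(M)`, and `KL(m | ρ)` is at most a constant times `|m - ρ|²` (`kl_le_sqDev`).
* `N E_{μ_N} |m - ρ|²` is bounded: `G(m) ≤ G(M) - ε |m - ρ|²` together with Stirling's bound on the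
  multinomial coefficients (`card_fiber_stirling`, `fiber_weight_le`) dominates the law of `m` by a
  discrete Gaussian, whose normalized sums are bounded (`gaussian_sum_le`,
  `gaussian_partition_bounded`).

**The quadratic estimates.** Both follow from a second order Taylor expansion at the maximizer and
compactness of the simplex away from it (`taylor_second_order`, `quadratic_max_on_compact`,
`quadratic_lower_on_compact`); negative definiteness of the Hessian and uniqueness of the maximizer
provide the constant `ε`.
-/

open Filter Real MeasureTheory

/-- Relative entropy (Kullback–Leibler divergence) between two probability mass
functions on a finite set. -/
noncomputable def relEnt {α : Type*} [Fintype α] (rho pion : α → ℝ) : ℝ :=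
  ∑ x, rho x * Real.log (rho x / pion x)

/-! ### Gibbs' inequality and superadditivity of relative entropy -/

/-- Gibbs' inequality: the relative entropy of a probability vector `P` with respect to the
normalization of `Q` is nonnegative. -/
lemma gibbs_inequality {α : Type*} [Fintype α] (P Q : α → ℝ) (hP : ∀ x, 0 < P x)
    (hP1 : ∑ x, P x = 1) (hQ : ∀ x, 0 < Q x) :
    ∑ x, P x * (Real.log (Q x) - Real.log (P x)) ≤ Real.log (∑ x, Q x) := by
  have hne : Nonempty α := by
    by_contra h
    rw [not_nonempty_iff] at h
    simp at hP1
  have hS : 0 < ∑ x, Q x := Finset.sum_pos (fun x _ => hQ x) Finset.univ_nonempty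
  have key : ∀ x, P x * (Real.log (Q x) - Real.log (P x)) ≤
      P x * Real.log (∑ x, Q x) + (Q x / (∑ x, Q x) - P x) := by
    intro x
    have h1 := Real.log_le_sub_one_of_pos (div_pos (div_pos (hQ x) hS) (hP x))
    rw [Real.log_div (div_pos (hQ x) hS).ne' (hP x).ne', Real.log_div (hQ x).ne' hS.ne'] at h1
    have h2 := mul_le_mul_of_nonneg_left h1 (hP x).le
    have h3 : P x * (Q x / (∑ x, Q x) / P x - 1) = Q x / (∑ x, Q x) - P x := by
      have := (hP x).ne'
      field_simp
    linarith [h3]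
  calc _ ≤ ∑ x, (P x * Real.log (∑ x, Q x) + (Q x / (∑ x, Q x) - P x)) :=
        Finset.sum_le_sum fun x _ => key x
    _ = _ := by
      rw [Finset.sum_add_distrib, Finset.sum_sub_distrib, ← Finset.sum_mul, ← Finset.sum_div, hP1,
        div_self hS.ne']
      ring

/-- Under a product measure, functions of disjoint blocks of coordinates are independent. The
index set consists of `B` blocks of length `k` and `r` further coordinates. -/
lemma sum_blocks {A : Type*} [Fintype A] [DecidableEq A] {N B k r : ℕ} (ρ : A → ℝ)
    (hρ1 : ∑ a, ρ a = 1) (h : (Fin k → A) → ℝ) (ψ : (Fin B × Fin k) ⊕ Fin r ≃ Fin N) :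
    ∑ σ : Fin N → A, (∏ i, ρ (σ i)) * ∏ b, h (fun i => σ (ψ (Sum.inl (b, i)))) =
      (∑ τ : Fin k → A, (∏ i, ρ (τ i)) * h τ) ^ B := by
  let e : (Fin N → A) ≃ (Fin B → Fin k → A) × (Fin r → A) :=
    (Equiv.arrowCongr ψ.symm (Equiv.refl A)).trans
      ((Equiv.sumArrowEquivProdArrow _ _ _).trans
        (Equiv.prodCongr (Equiv.curry _ _ _) (Equiv.refl _)))
  have he : ∀ σ : Fin N → A, (∏ i, ρ (σ i)) * ∏ b, h (fun i => σ (ψ (Sum.inl (b, i)))) =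
      (∏ b, ((∏ i, ρ ((e σ).1 b i)) * h ((e σ).1 b))) * ∏ i, ρ ((e σ).2 i) := by
    intro σ
    rw [← Equiv.prod_comp ψ, Fintype.prod_sum_type, Fintype.prod_prod_type,
      Finset.prod_mul_distrib]
    have h1 : ∀ b i, (e σ).1 b i = σ (ψ (Sum.inl (b, i))) := fun b i => rfl
    have h2 : ∀ i, (e σ).2 i = σ (ψ (Sum.inr i)) := fun i => rfl
    have h3 : ∀ b, (e σ).1 b = fun i => σ (ψ (Sum.inl (b, i))) := fun b => rfl
    simp only [h2, h3]
    ring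
  rw [Finset.sum_congr rfl fun σ _ => he σ,
    Equiv.sum_comp e (fun p : (Fin B → Fin k → A) × (Fin r → A) =>
      (∏ b, ((∏ i, ρ (p.1 b i)) * h (p.1 b))) * ∏ i, ρ (p.2 i)),
    Fintype.sum_prod_type]
  simp only [← Finset.mul_sum]
  rw [← Finset.sum_mul, ← Fintype.sum_pow ρ r, hρ1, one_pow, mul_one,
    Fintype.sum_pow (fun τ : Fin k → A => (∏ i, ρ (τ i)) * h τ) B]

/-- The `k`-marginal of an exchangeable law `P` on `A ^ N` has relative entropy at most
`2 k / N` times that of `P`, with respect to powers of a fixed `ρ`: cut `{1, …, N}` into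
`⌊N / k⌋` blocks and use superadditivity. -/
lemma relEnt_marginal_le {A : Type*} [Fintype A] [DecidableEq A] {N k : ℕ} (hk1 : 1 ≤ k)
    (hk : k ≤ N) (ρ : A → ℝ) (hρ : ∀ a, 0 < ρ a) (hρ1 : ∑ a, ρ a = 1)
    (P : (Fin N → A) → ℝ) (hP : ∀ σ, 0 < P σ) (hP1 : ∑ σ, P σ = 1)
    (hex : ∀ (g : Equiv.Perm (Fin N)) (σ : Fin N → A), P (σ ∘ g) = P σ)
    (C : ℝ) (hC : relEnt P (fun σ => ∏ i, ρ (σ i)) ≤ C) (hC0 : 0 ≤ C) :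
    relEnt (fun τ : Fin k → A => ∑ σ : Fin N → A,
        if ∀ i : Fin k, σ (Fin.castLE hk i) = τ i then P σ else 0)
      (fun τ : Fin k → A => ∏ i, ρ (τ i)) ≤ 2 * C * k / N := by
  set Pk : (Fin k → A) → ℝ := fun τ => ∑ σ : Fin N → A,
        if ∀ i : Fin k, σ (Fin.castLE hk i) = τ i then P σ else 0 with hPk
  have hA : Nonempty A := by
    by_contra h
    rw [not_nonempty_iff] at h
    simp at hρ1
  have hmarg : ∀ f : (Fin k → A) → ℝ,
      ∑ σ, P σ * f (fun i => σ (Fin.castLE hk i)) = ∑ τ, Pk τ * f τ := by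
    intro f
    simp only [hPk, Finset.sum_mul]
    rw [Finset.sum_comm]
    refine Finset.sum_congr rfl fun σ _ => ?_
    rw [Finset.sum_eq_single (fun i => σ (Fin.castLE hk i))]
    · simp
    · intro τ _ hτ
      rw [if_neg, zero_mul]
      intro h
      exact hτ (funext fun i => (h i).symm)
    · simp
  have hPkpos : ∀ τ, 0 < Pk τ := by
    intro τ
    obtain ⟨a⟩ := hA
    have h0 : ∀ σ : Fin N → A,
        0 ≤ if ∀ i : Fin k, σ (Fin.castLE hk i) = τ i then P σ else 0 := by
      intro σ
      split_ifs
      exacts [(hP σ).le, le_rfl]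
    refine Finset.sum_pos' (fun σ _ => h0 σ)
      ⟨fun i => if h : (i : ℕ) < k then τ ⟨i, h⟩ else a, Finset.mem_univ _, ?_⟩
    rw [if_pos]
    · exact hP _
    · intro i
      simp
  have hPk1 : ∑ τ, Pk τ = 1 := by
    have := hmarg (fun _ => 1)
    simp only [mul_one] at this
    rw [← this, hP1]
  have hR : ∀ {n : ℕ} (τ : Fin n → A), 0 < ∏ i, ρ (τ i) :=
    fun τ => Finset.prod_pos fun i _ => hρ _
  set B := N / k with hB
  set r := N % k with hr
  have hN : B * k + r = N := Nat.div_add_mod' N k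
  let ψ : (Fin B × Fin k) ⊕ Fin r ≃ Fin N :=
    ((Equiv.sumCongr finProdFinEquiv (Equiv.refl _)).trans finSumFinEquiv).trans (finCongr hN)
  set h : (Fin k → A) → ℝ := fun τ => Pk τ / ∏ i, ρ (τ i) with hh
  have hhpos : ∀ τ, 0 < h τ := fun τ => div_pos (hPkpos τ) (hR τ)
  -- the tilted product measure whose blocks have the law `Pk`
  let Q : (Fin N → A) → ℝ := fun σ =>
    (∏ i, ρ (σ i)) * ∏ b, h (fun i => σ (ψ (Sum.inl (b, i))))
  have hQ1 : ∑ σ, Q σ = 1 := by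
    rw [sum_blocks ρ hρ1 h ψ]
    have : ∀ τ : Fin k → A, (∏ i, ρ (τ i)) * h τ = Pk τ := fun τ =>
      mul_div_cancel₀ _ (hR τ).ne'
    simp only [this, hPk1, one_pow]
  have hQpos : ∀ σ, 0 < Q σ := fun σ =>
    mul_pos (hR σ) (Finset.prod_pos fun b _ => hhpos _)
  have hblock : ∀ b, ∑ σ, P σ * Real.log (h (fun i => σ (ψ (Sum.inl (b, i))))) =
      relEnt Pk (fun τ => ∏ i, ρ (τ i)) := by
    intro b
    obtain ⟨g, hg⟩ := Equiv.Perm.exists_extending_pair (fun i : Fin k => ψ (Sum.inl (b, i)))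
      (fun i => Fin.castLE hk i) (by
        intro i j hij
        simpa using hij) (Fin.castLE_injective hk)
    have h1 := hmarg (fun τ => Real.log (h τ))
    rw [relEnt, ← h1, ← Equiv.sum_comp (Equiv.arrowCongr g.symm (Equiv.refl A))]
    refine Finset.sum_congr rfl fun σ _ => ?_
    have h2 : (Equiv.arrowCongr g.symm (Equiv.refl A)) σ = σ ∘ g := rfl
    rw [h2, hex]
    simp only [Function.comp, hg]
  have hgibbs := gibbs_inequality P Q hP hP1 hQpos
  rw [hQ1, Real.log_one] at hgibbs
  have hsplit : ∑ x, P x * (Real.log (Q x) - Real.log (P x)) =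
      B * relEnt Pk (fun τ => ∏ i, ρ (τ i)) - relEnt P (fun σ => ∏ i, ρ (σ i)) := by
    have h1 : (B : ℝ) * relEnt Pk (fun τ => ∏ i, ρ (τ i)) =
        ∑ σ, ∑ b, P σ * Real.log (h (fun i => σ (ψ (Sum.inl (b, i))))) := by
      rw [Finset.sum_comm, Finset.sum_congr rfl fun b _ => hblock b]
      simp
    rw [h1, relEnt, ← Finset.sum_sub_distrib]
    refine Finset.sum_congr rfl fun σ _ => ?_
    have h2 : Real.log (Q σ) = Real.log (∏ i, ρ (σ i)) +
        ∑ b, Real.log (h (fun i => σ (ψ (Sum.inl (b, i))))) := by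
      rw [Real.log_mul (hR σ).ne' (Finset.prod_pos fun b _ => hhpos _).ne',
        Real.log_prod fun b _ => (hhpos _).ne']
    rw [h2, Real.log_div (hP σ).ne' (hR σ).ne', ← Finset.mul_sum]
    ring
  have hBH : B * relEnt Pk (fun τ => ∏ i, ρ (τ i)) ≤ C := by linarith
  have hB1 : 1 ≤ B := (Nat.one_le_div_iff (by omega)).2 hk
  have hrk : r < k := Nat.mod_lt _ (by omega)
  have hN2 : N ≤ 2 * (B * k) := by nlinarith
  have hN0 : (0 : ℝ) < N := by exact_mod_cast (by omega : 0 < N)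
  have hB0 : (0 : ℝ) < B := by exact_mod_cast hB1
  have hN2' : (N : ℝ) ≤ 2 * (B * k) := by exact_mod_cast hN2
  rw [le_div_iff₀ hN0]
  have h3 : relEnt Pk (fun τ => ∏ i, ρ (τ i)) ≤ C / B := by
    rw [le_div_iff₀ hB0]; linarith
  calc _ ≤ C / B * N := mul_le_mul_of_nonneg_right h3 hN0.le
    _ ≤ C / B * (2 * (B * k)) := mul_le_mul_of_nonneg_left hN2' (by positivity)
    _ = _ := by field_simp

/-! ### Magnetization and moments under the product measure -/

/-- The number of sites of `σ` carrying the spin `k`. -/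
def spinCount {N q : ℕ} (σ : Fin N → Fin q) (k : Fin q) : ℕ :=
  (Finset.univ.filter fun i => σ i = k).card

/-- The magnetization vector of `σ`. -/
noncomputable def mag {N q : ℕ} (σ : Fin N → Fin q) : Fin q → ℝ :=
  fun k => (spinCount σ k : ℝ) / N

/-- The squared Euclidean distance between `m` and `ρ`. -/
def sqDev {q : ℕ} (ρ m : Fin q → ℝ) : ℝ := ∑ k, (m k - ρ k) ^ 2

lemma sqDev_nonneg {q : ℕ} (ρ m : Fin q → ℝ) : 0 ≤ sqDev ρ m :=
  Finset.sum_nonneg fun _ _ => sq_nonneg _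

lemma sum_spinCount {N q : ℕ} (σ : Fin N → Fin q) : ∑ k, spinCount σ k = N := by
  simp only [spinCount]
  rw [← Finset.card_eq_sum_card_fiberwise (f := σ) (s := Finset.univ) (t := Finset.univ)
    (by intro x _; simp)]
  simp

lemma sum_comp_eq_mag {N q : ℕ} (hN : 1 ≤ N) (σ : Fin N → Fin q) (f : Fin q → ℝ) :
    ∑ i, f (σ i) = N * ∑ k, mag σ k * f k := by
  have hN0 : (N : ℝ) ≠ 0 := by positivity
  rw [← Finset.sum_fiberwise Finset.univ σ, Finset.mul_sum]
  refine Finset.sum_congr rfl fun k _ => ?_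
  rw [Finset.sum_congr rfl (g := fun _ => f k)
    (fun i hi => by rw [(Finset.mem_filter.1 hi).2]), Finset.sum_const, nsmul_eq_mul, mag,
    spinCount]
  field_simp

lemma mag_nonneg {N q : ℕ} (σ : Fin N → Fin q) (k : Fin q) : 0 ≤ mag σ k := by
  unfold mag; positivity

lemma sum_mag {N q : ℕ} (hN : 1 ≤ N) (σ : Fin N → Fin q) : ∑ k, mag σ k = 1 := by
  have hN0 : (N : ℝ) ≠ 0 := by positivity
  have := sum_comp_eq_mag hN σ (fun _ => 1)
  simp only [mul_one, Finset.sum_const, Finset.card_univ, Fintype.card_fin, nsmul_eq_mul] at this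
  exact (mul_left_cancel₀ hN0 (by rw [mul_one]; exact this)).symm

lemma mag_comp_perm {N q : ℕ} (σ : Fin N → Fin q) (g : Equiv.Perm (Fin N)) :
    mag (σ ∘ g) = mag σ := by
  funext k
  simp only [mag, spinCount]
  congr 2
  refine Finset.card_bij (fun i _ => g i) ?_ ?_ ?_
  · intro i hi; simpa using hi
  · intro i _ j _ h; simpa using h
  · intro j hj
    exact ⟨g.symm j, by simpa using hj, by simp⟩

lemma sum_cons_prod {A : Type*} [Fintype A] (ρ : A → ℝ) {n : ℕ} (f : (Fin (n + 1) → A) → ℝ) :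
    ∑ σ : Fin (n + 1) → A, (∏ i, ρ (σ i)) * f σ =
      ∑ a, ρ a * ∑ σ : Fin n → A, (∏ i, ρ (σ i)) * f (Fin.cons a σ) := by
  rw [← Equiv.sum_comp (Fin.consEquiv (fun _ => A)), Fintype.sum_prod_type]
  refine Finset.sum_congr rfl fun a _ => ?_
  rw [Finset.mul_sum]
  refine Finset.sum_congr rfl fun σ _ => ?_
  simp [Fin.consEquiv, Fin.prod_univ_succ, mul_assoc]

lemma first_moment {A : Type*} [Fintype A] (ρ h : A → ℝ) (hρ1 : ∑ a, ρ a = 1)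
    (h0 : ∑ a, ρ a * h a = 0) (n : ℕ) :
    ∑ σ : Fin n → A, (∏ i, ρ (σ i)) * ∑ i, h (σ i) = 0 := by
  induction n with
  | zero => simp
  | succ n ih =>
    rw [sum_cons_prod]
    simp only [Fin.sum_univ_succ, Fin.cons_zero, Fin.cons_succ, mul_add, Finset.sum_add_distrib,
      ih, add_zero, ← Finset.sum_mul]
    simp only [← Fintype.sum_pow, hρ1, one_pow, one_mul, h0]

lemma second_moment {A : Type*} [Fintype A] (ρ h : A → ℝ) (hρ1 : ∑ a, ρ a = 1)
    (h0 : ∑ a, ρ a * h a = 0) (n : ℕ) :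
    ∑ σ : Fin n → A, (∏ i, ρ (σ i)) * (∑ i, h (σ i)) ^ 2 = n * ∑ a, ρ a * h a ^ 2 := by
  induction n with
  | zero => simp
  | succ n ih =>
    rw [sum_cons_prod]
    have key : ∀ a, ∑ σ : Fin n → A, (∏ i, ρ (σ i)) *
        (∑ i, h ((Fin.cons a σ : Fin (n + 1) → A) i)) ^ 2 =
        h a ^ 2 + n * ∑ a, ρ a * h a ^ 2 := by
      intro a
      have e : ∀ σ : Fin n → A, (∏ i, ρ (σ i)) *
          (∑ i, h ((Fin.cons a σ : Fin (n + 1) → A) i)) ^ 2 =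
          (∏ i, ρ (σ i)) * h a ^ 2 + 2 * h a * ((∏ i, ρ (σ i)) * ∑ i, h (σ i)) +
            (∏ i, ρ (σ i)) * (∑ i, h (σ i)) ^ 2 := by
        intro σ
        simp only [Fin.sum_univ_succ, Fin.cons_zero, Fin.cons_succ]
        ring
      simp only [e, Finset.sum_add_distrib, ← Finset.mul_sum, ← Finset.sum_mul,
        first_moment ρ h hρ1 h0 n, ih, ← Fintype.sum_pow, hρ1, one_pow]
      ring
    simp only [key, mul_add, Finset.sum_add_distrib, ← Finset.sum_mul, hρ1]
    push_cast
    ring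

lemma expect_linear_mag {N q : ℕ} (hN : 1 ≤ N) (ρ L : Fin q → ℝ) (hρ1 : ∑ a, ρ a = 1) :
    ∑ σ : Fin N → Fin q, (∏ i, ρ (σ i)) * ∑ k, L k * (mag σ k - ρ k) = 0 := by
  have hN0 : (N : ℝ) ≠ 0 := by positivity
  have h := first_moment ρ (fun k => L k - ∑ j, ρ j * L j) hρ1 (by
    simp only [mul_sub, Finset.sum_sub_distrib, ← Finset.sum_mul, hρ1]; ring) N
  have e : ∀ σ : Fin N → Fin q, ∑ i, (L (σ i) - ∑ j, ρ j * L j) =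
      N * ∑ k, L k * (mag σ k - ρ k) := by
    intro σ
    rw [sum_comp_eq_mag hN σ (fun k => L k - ∑ j, ρ j * L j)]
    simp only [mul_sub, Finset.sum_sub_distrib, ← Finset.sum_mul, sum_mag hN σ, one_mul]
    simp only [mul_comm]
  simp only [e] at h
  have h2 : (N : ℝ) * ∑ σ : Fin N → Fin q, (∏ i, ρ (σ i)) * ∑ k, L k * (mag σ k - ρ k) = 0 := by
    rw [← h, Finset.mul_sum]
    exact Finset.sum_congr rfl fun σ _ => by ring
  exact (mul_eq_zero.1 h2).resolve_left hN0

lemma expect_sqDev_le {N q : ℕ} (hN : 1 ≤ N) (ρ : Fin q → ℝ)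
    (hρ1 : ∑ a, ρ a = 1) :
    N * ∑ σ : Fin N → Fin q, (∏ i, ρ (σ i)) * sqDev ρ (mag σ) ≤ 1 := by
  have hN0 : (0 : ℝ) < N := by positivity
  have key : ∀ k, ∑ σ : Fin N → Fin q, (∏ i, ρ (σ i)) * (mag σ k - ρ k) ^ 2 ≤ ρ k / N := by
    intro k
    have h := second_moment ρ (fun j => (if j = k then 1 else 0) - ρ k) hρ1 (by
      simp [mul_sub, Finset.sum_sub_distrib, ← Finset.sum_mul, hρ1]) N
    have hv : ∑ a, ρ a * ((if a = k then (1 : ℝ) else 0) - ρ k) ^ 2 = ρ k - ρ k ^ 2 := by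
      have : ∀ a, ρ a * ((if a = k then (1 : ℝ) else 0) - ρ k) ^ 2 =
          (if a = k then ρ a * (1 - 2 * ρ k) else 0) + ρ a * ρ k ^ 2 := by
        intro a
        split_ifs <;> ring
      simp only [this, Finset.sum_add_distrib, ← Finset.sum_mul, hρ1]
      simp
      ring
    have e : ∀ σ : Fin N → Fin q, ∑ i, ((if σ i = k then (1 : ℝ) else 0) - ρ k) =
        N * (mag σ k - ρ k) := by
      intro σ
      rw [sum_comp_eq_mag hN σ (fun j => (if j = k then (1 : ℝ) else 0) - ρ k)]
      simp [mul_sub, Finset.sum_sub_distrib, ← Finset.sum_mul, sum_mag hN σ]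
    simp only [e, hv] at h
    have h2 : (N : ℝ) ^ 2 * ∑ σ : Fin N → Fin q, (∏ i, ρ (σ i)) * (mag σ k - ρ k) ^ 2 =
        N * (ρ k - ρ k ^ 2) := by
      rw [← h, Finset.mul_sum]
      exact Finset.sum_congr rfl fun σ _ => by ring
    rw [le_div_iff₀ hN0]
    nlinarith [sq_nonneg (ρ k), mul_pos hN0 hN0]
  simp only [sqDev, Finset.mul_sum]
  rw [Finset.sum_comm]
  calc _ = ∑ k, N * ∑ σ : Fin N → Fin q, (∏ i, ρ (σ i)) * (mag σ k - ρ k) ^ 2 := by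
        simp only [Finset.mul_sum]
    _ ≤ ∑ k, N * (ρ k / N) :=
        Finset.sum_le_sum fun k _ => mul_le_mul_of_nonneg_left (key k) hN0.le
    _ = ∑ k, ρ k := Finset.sum_congr rfl fun k _ => by field_simp
    _ ≤ 1 := hρ1.le

/-! ### Counting configurations and Gaussian sums -/

lemma card_spinCount_fiber_mul_le {N q : ℕ} (n : Fin q → ℕ) :
    (Finset.univ.filter fun σ : Fin N → Fin q => spinCount σ = n).card * ∏ k, (n k).factorial ≤
      N.factorial := by
  classical
  rcases (Finset.univ.filter fun σ : Fin N → Fin q => spinCount σ = n).eq_empty_or_nonempty with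
    h | ⟨σ₀, h₀⟩
  · simp [h]
  have h₀ : spinCount σ₀ = n := by simpa using h₀
  -- each `σ` of the class is `σ₀ ∘ g` for as many permutations `g` as stabilize `σ₀`
  have hstab : ∀ σ : Fin N → Fin q, spinCount σ = n →
      (Finset.univ.filter fun g : Equiv.Perm (Fin N) => σ₀ ∘ g = σ).card =
        ∏ k, (n k).factorial := by
    intro σ hσ
    have hcard : ∀ k, Fintype.card {i // σ₀ i = k} = Fintype.card {i // σ i = k} := by
      intro k
      rw [Fintype.card_subtype, Fintype.card_subtype]
      exact congrFun (h₀.trans hσ.symm) k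
    let e : ∀ k, {i // σ i = k} ≃ {i // σ₀ i = k} :=
      fun k => Fintype.equivOfCardEq (hcard k).symm
    let g₀ : Equiv.Perm (Fin N) :=
      (Equiv.sigmaFiberEquiv σ).symm.trans ((Equiv.sigmaCongrRight e).trans
        (Equiv.sigmaFiberEquiv σ₀))
    have hg₀ : σ₀ ∘ g₀ = σ := by
      funext i
      exact (e (σ i) ⟨i, rfl⟩).2
    have hs := DomMulAct.stabilizer_card σ₀
    rw [Fintype.card_subtype] at hs
    have hn : ∀ k, Fintype.card {i // σ₀ i = k} = n k := by
      intro k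
      rw [Fintype.card_subtype]
      exact congrFun h₀ k
    simp only [hn] at hs
    rw [← hs]
    refine Finset.card_bij (fun g _ => g * g₀⁻¹) ?_ ?_ ?_
    · intro g hg
      simp only [Finset.mem_filter, Finset.mem_univ, true_and] at hg ⊢
      rw [Equiv.Perm.coe_mul, ← Function.comp_assoc, hg, ← hg₀, Function.comp_assoc,
        ← Equiv.Perm.coe_mul]
      simp
    · intro a _ b _ hab
      exact mul_right_cancel hab
    · intro g hg
      simp only [Finset.mem_filter, Finset.mem_univ, true_and] at hg
      refine ⟨g * g₀, ?_, by simp⟩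
      simp only [Finset.mem_filter, Finset.mem_univ, true_and]
      rw [Equiv.Perm.coe_mul, ← Function.comp_assoc, hg, hg₀]
  calc _ = ∑ σ ∈ Finset.univ.filter fun σ : Fin N → Fin q => spinCount σ = n,
        (Finset.univ.filter fun g : Equiv.Perm (Fin N) => σ₀ ∘ g = σ).card := by
        rw [Finset.sum_congr rfl fun σ hσ => hstab σ (by simpa using hσ)]
        simp
    _ ≤ ∑ σ : Fin N → Fin q,
        (Finset.univ.filter fun g : Equiv.Perm (Fin N) => σ₀ ∘ g = σ).card :=
        Finset.sum_le_sum_of_subset (Finset.filter_subset _ _)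
    _ = (Finset.univ : Finset (Equiv.Perm (Fin N))).card := by
        rw [← Finset.card_eq_sum_card_fiberwise (t := Finset.univ)
          (f := fun g : Equiv.Perm (Fin N) => σ₀ ∘ g) (by intro x _; simp)]
    _ = N.factorial := by simp [Fintype.card_perm]

lemma factorial_le_stirling (n : ℕ) (hn : 1 ≤ n) :
    (n.factorial : ℝ) ≤ Real.exp 1 * Real.sqrt n * (n / Real.exp 1) ^ n := by
  obtain ⟨m, rfl⟩ : ∃ m, n = m + 1 := ⟨n - 1, by omega⟩
  have h := Stirling.stirlingSeq'_antitone (Nat.zero_le m)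
  simp only [Function.comp, Nat.succ_eq_add_one, zero_add, Stirling.stirlingSeq_one] at h
  rw [Stirling.stirlingSeq, div_le_iff₀ (by positivity)] at h
  refine h.trans (le_of_eq ?_)
  rw [Real.sqrt_mul (by norm_num)]
  field_simp

lemma card_fiber_stirling {N q : ℕ} (hN : 1 ≤ N) (n : Fin q → ℕ) (hn : ∑ k, n k = N) :
    ((Finset.univ.filter fun σ : Fin N → Fin q => spinCount σ = n).card : ℝ) *
      (∏ k, ((n k : ℝ) / N) ^ n k) * ∏ k, Real.sqrt (n k) ≤ Real.exp 1 * Real.sqrt N := by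
  set c := (Finset.univ.filter fun σ : Fin N → Fin q => spinCount σ = n).card with hc
  have hN0 : (0 : ℝ) < N := by positivity
  have hE : (0 : ℝ) < (N / Real.exp 1) ^ N := by positivity
  have h1 : (c : ℝ) * ∏ k, ((n k).factorial : ℝ) ≤ N.factorial := by
    exact_mod_cast card_spinCount_fiber_mul_le n
  have h2 : ∏ k, (Real.sqrt (n k) * ((n k : ℝ) / Real.exp 1) ^ n k) ≤
      ∏ k, ((n k).factorial : ℝ) := by
    refine Finset.prod_le_prod (fun k _ => by positivity) fun k _ => ?_
    refine le_trans ?_ (Stirling.le_factorial_stirling (n k))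
    refine mul_le_mul_of_nonneg_right (Real.sqrt_le_sqrt ?_) (by positivity)
    have := Real.pi_gt_three
    nlinarith [Nat.cast_nonneg (α := ℝ) (n k)]
  have h3 : ∏ k, ((n k : ℝ) / Real.exp 1) ^ n k =
      (∏ k, ((n k : ℝ) / N) ^ n k) * (N / Real.exp 1) ^ N := by
    have h4 : (N / Real.exp 1) ^ N = ∏ k, ((N : ℝ) / Real.exp 1) ^ n k := by
      rw [Finset.prod_pow_eq_pow_sum, hn]
    rw [h4, ← Finset.prod_mul_distrib]
    refine Finset.prod_congr rfl fun k _ => ?_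
    rw [← mul_pow]
    congr 1
    field_simp
  have h5 := factorial_le_stirling N hN
  rw [Finset.prod_mul_distrib, h3] at h2
  have h6 := (mul_le_mul_of_nonneg_left h2 (Nat.cast_nonneg (α := ℝ) c)).trans (h1.trans h5)
  refine le_of_mul_le_mul_right ?_ hE
  calc _ = _ := by ring
    _ ≤ _ := h6

lemma card_fiber_le_one {N q : ℕ} (hN : 1 ≤ N) (n : Fin q → ℕ) (hn : ∑ k, n k = N) :
    ((Finset.univ.filter fun σ : Fin N → Fin q => spinCount σ = n).card : ℝ) *
      (∏ k, ((n k : ℝ) / N) ^ n k) ≤ 1 := by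
  have hN0 : (N : ℝ) ≠ 0 := by positivity
  have hone : ∑ k, (n k : ℝ) / N = 1 := by
    rw [← Finset.sum_div, ← Nat.cast_sum, hn, div_self hN0]
  have hprod : ∀ σ : Fin N → Fin q, spinCount σ = n →
      ∏ i, ((n (σ i) : ℝ) / N) = ∏ k, ((n k : ℝ) / N) ^ n k := by
    intro σ hσ
    rw [← Finset.prod_fiberwise Finset.univ σ]
    refine Finset.prod_congr rfl fun k _ => ?_
    rw [Finset.prod_congr rfl (g := fun _ => (n k : ℝ) / N)
      (fun i hi => by rw [(Finset.mem_filter.1 hi).2]), Finset.prod_const]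
    congr 1
    exact congrFun hσ k
  calc _ = ∑ σ ∈ Finset.univ.filter fun σ : Fin N → Fin q => spinCount σ = n,
        ∏ i, ((n (σ i) : ℝ) / N) := by
        rw [Finset.sum_congr rfl fun σ hσ => hprod σ (by simpa using hσ)]
        simp
    _ ≤ ∑ σ : Fin N → Fin q, ∏ i, ((n (σ i) : ℝ) / N) :=
        Finset.sum_le_sum_of_subset_of_nonneg (Finset.filter_subset _ _)
          fun σ _ _ => Finset.prod_nonneg fun i _ => by positivity
    _ = 1 := by
        rw [← Fintype.sum_pow (fun k => (n k : ℝ) / N), hone, one_pow]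

lemma sum_geometric_abs_le (r : ℝ) (hr0 : 0 ≤ r) (hr1 : r < 1) (c n : ℕ) :
    ∑ j ∈ Finset.range n, r ^ ((j - c) + (c - j)) ≤ 2 / (1 - r) := by
  have hgeo : ∀ m, ∑ j ∈ Finset.range m, r ^ j ≤ 1 / (1 - r) := by
    intro m
    rw [one_div, ← tsum_geometric_of_lt_one hr0 hr1]
    exact (summable_geometric_of_lt_one hr0 hr1).sum_le_tsum _ (fun i _ => by positivity)
  calc _ ≤ ∑ j ∈ Finset.range (c + n), r ^ ((j - c) + (c - j)) :=
        Finset.sum_le_sum_of_subset_of_nonneg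
          (Finset.range_subset_range.2 (by omega)) fun i _ _ => by positivity
    _ = ∑ j ∈ Finset.range c, r ^ ((j - c) + (c - j)) + ∑ j ∈ Finset.range n, r ^ j := by
        rw [Finset.sum_range_add]
        congr 1
        refine Finset.sum_congr rfl fun j _ => ?_
        congr 1
        omega
    _ = ∑ j ∈ Finset.range c, r ^ (j + 1) + ∑ j ∈ Finset.range n, r ^ j := by
        congr 1
        rw [← Finset.sum_range_reflect]
        refine Finset.sum_congr rfl fun j hj => ?_
        rw [Finset.mem_range] at hj
        congr 1
        omega
    _ ≤ ∑ j ∈ Finset.range c, r ^ j + ∑ j ∈ Finset.range n, r ^ j := by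
        refine add_le_add (Finset.sum_le_sum fun j _ => ?_) le_rfl
        exact pow_le_pow_of_le_one hr0 hr1.le (Nat.le_succ j)
    _ ≤ 1 / (1 - r) + 1 / (1 - r) := add_le_add (hgeo _) (hgeo _)
    _ = _ := by ring

/-- A Riemann-sum bound: Gaussian weights of variance of order `N` on the integers have total mass
of order `√N`, uniformly in the centre `b`. -/
lemma gaussian_sum_le (a : ℝ) (ha : 0 < a) : ∃ K > 0, ∀ N : ℕ, 1 ≤ N → ∀ b : ℝ, 0 ≤ b →
    ∑ j ∈ Finset.range (N + 1), Real.exp (-(a * ((j : ℝ) - b) ^ 2 / N)) ≤ K * Real.sqrt N := by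
  refine ⟨Real.exp (1 / (4 * a) + 1) * 4, by positivity, ?_⟩
  intro N hN b hb
  have hN0 : (0 : ℝ) < N := by positivity
  set s := Real.sqrt N with hs
  have hs1 : 1 ≤ s := by
    rw [hs, Real.one_le_sqrt]
    exact_mod_cast hN
  have hs0 : 0 < s := by linarith
  have hsN : (N : ℝ) = s ^ 2 := (Real.sq_sqrt hN0.le).symm
  set x := 1 / s with hx
  have hx0 : 0 < x := by positivity
  have hx1 : x ≤ 1 := by rw [hx, div_le_one hs0]; exact hs1
  set c := ⌊b⌋₊
  have hc1 : (c : ℝ) ≤ b := Nat.floor_le hb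
  have hc2 : b < c + 1 := Nat.lt_floor_add_one b
  have hterm : ∀ j ∈ Finset.range (N + 1), Real.exp (-(a * ((j : ℝ) - b) ^ 2 / N)) ≤
      Real.exp (1 / (4 * a) + 1) * (Real.exp (-x)) ^ ((j - c) + (c - j)) := by
    intro j _
    rw [← Real.exp_nat_mul, ← Real.exp_add, Real.exp_le_exp]
    have habs : (((j - c) + (c - j) : ℕ) : ℝ) ≤ |(j : ℝ) - b| + 1 := by
      rcases le_total c j with h | h
      · rw [Nat.sub_eq_zero_of_le h, add_zero, Nat.cast_sub h]
        have := le_abs_self ((j : ℝ) - b)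
        linarith
      · rw [Nat.sub_eq_zero_of_le h, zero_add, Nat.cast_sub h]
        have := neg_abs_le ((j : ℝ) - b)
        linarith
    have e1 : a * ((j : ℝ) - b) ^ 2 / N = a * (|(j : ℝ) - b| * x) ^ 2 := by
      rw [hsN, hx, mul_pow, sq_abs]
      field_simp
    rw [e1]
    set t := |(j : ℝ) - b| * x with ht
    have h2 : t - 1 / (4 * a) ≤ a * t ^ 2 := by
      have : a * t ^ 2 - (t - 1 / (4 * a)) = (2 * a * t - 1) ^ 2 / (4 * a) := by
        field_simp
        ring
      have h3 : 0 ≤ (2 * a * t - 1) ^ 2 / (4 * a) := by positivity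
      linarith
    have h4 : (((j - c) + (c - j) : ℕ) : ℝ) * x ≤ t + 1 := by
      calc _ ≤ (|(j : ℝ) - b| + 1) * x := mul_le_mul_of_nonneg_right habs hx0.le
        _ = t + x := by rw [ht]; ring
        _ ≤ t + 1 := by linarith
    linarith
  have hr1 : Real.exp (-x) ≤ 1 - x / 2 := by
    rw [Real.exp_neg]
    have h1 : 1 + x ≤ Real.exp x := by linarith [Real.add_one_le_exp x]
    calc (Real.exp x)⁻¹ ≤ (1 + x)⁻¹ := inv_anti₀ (by linarith) h1
      _ ≤ 1 - x / 2 := by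
        rw [inv_le_iff_one_le_mul₀ (by linarith)]
        nlinarith
  calc _ ≤ ∑ j ∈ Finset.range (N + 1),
        Real.exp (1 / (4 * a) + 1) * (Real.exp (-x)) ^ ((j - c) + (c - j)) :=
        Finset.sum_le_sum hterm
    _ ≤ Real.exp (1 / (4 * a) + 1) * (2 / (1 - Real.exp (-x))) := by
        rw [← Finset.mul_sum]
        refine mul_le_mul_of_nonneg_left ?_ (Real.exp_pos _).le
        exact sum_geometric_abs_le _ (Real.exp_pos _).le (by linarith) c (N + 1)
    _ ≤ Real.exp (1 / (4 * a) + 1) * (4 * s) := by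
        refine mul_le_mul_of_nonneg_left ?_ (Real.exp_pos _).le
        rw [div_le_iff₀ (by linarith)]
        have : s * x = 1 := by rw [hx]; field_simp
        nlinarith
    _ = _ := by ring

/-! ### Uniform bound on the relative entropy of the full Gibbs measure -/

/-- Minus the Shannon entropy of `m`. -/
noncomputable def negEnt {q : ℕ} (m : Fin q → ℝ) : ℝ := ∑ k, m k * Real.log (m k)

lemma exp_negEnt_mag {N q : ℕ} (hN : 1 ≤ N) (σ : Fin N → Fin q) :
    Real.exp (N * negEnt (mag σ)) = ∏ k, ((spinCount σ k : ℝ) / N) ^ spinCount σ k := by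
  have hN0 : (N : ℝ) ≠ 0 := by positivity
  rw [negEnt, Finset.mul_sum, Real.exp_sum]
  refine Finset.prod_congr rfl fun k _ => ?_
  rcases Nat.eq_zero_or_pos (spinCount σ k) with h | h
  · simp [mag, h]
  · have hpos : (0 : ℝ) < (spinCount σ k : ℝ) / N := by positivity
    have e : (N : ℝ) * (mag σ k * Real.log (mag σ k)) =
        spinCount σ k * Real.log ((spinCount σ k : ℝ) / N) := by
      simp only [mag]
      field_simp
    rw [e, Real.exp_nat_mul, Real.exp_log hpos]

/-- The local limit bound. The number of configurations with counts `n`, times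
`exp (-N ent (n / N))`, is of order `N ^ (-d / 2)` for `n / N` near `ρ` by Stirling's formula, and
at most `1` elsewhere, where half of the Gaussian factor makes up for the missing power of `N`. -/
lemma fiber_weight_le {d : ℕ} (ρ : Fin (d + 1) → ℝ) (hρ : ∀ k, 0 < ρ k) (ε : ℝ) (hε : 0 < ε) :
    ∃ K > 0, ∀ N : ℕ, 1 ≤ N → ∀ n : Fin (d + 1) → ℕ, ∑ k, n k = N →
      ((Finset.univ.filter fun σ : Fin N → Fin (d + 1) => spinCount σ = n).card : ℝ) *
        (∏ k, ((n k : ℝ) / N) ^ n k) * Real.exp (-(ε * (N * sqDev ρ (fun k => (n k : ℝ) / N)))) ≤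
      K / Real.sqrt N ^ d * Real.exp (-(ε / 2 * (N * sqDev ρ (fun k => (n k : ℝ) / N)))) := by
  set c : ℝ := ∏ k, Real.sqrt (ρ k / 2) with hc
  have hc0 : 0 < c := Finset.prod_pos fun k _ => Real.sqrt_pos.2 (by have := hρ k; positivity)
  let b : Fin (d + 1) → ℝ := fun k => ε / 2 * (ρ k / 2) ^ 2
  have hb : ∀ k, 0 < b k := fun k => by have := hρ k; simp only [b]; positivity
  have hKb : ∀ k, 0 < (d.factorial : ℝ) / b k ^ d := fun k => by have := hb k; positivity
  have hsum0 : 0 ≤ ∑ k, (d.factorial : ℝ) / b k ^ d := Finset.sum_nonneg fun k _ => (hKb k).le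
  refine ⟨Real.exp 1 / c + ∑ k, (d.factorial : ℝ) / b k ^ d, by positivity, ?_⟩
  intro N hN n hn
  have hN0 : (0 : ℝ) < N := by positivity
  have hN1 : (1 : ℝ) ≤ N := by exact_mod_cast hN
  set s := Real.sqrt N with hs
  have hs0 : 0 < s := Real.sqrt_pos.2 hN0
  have hs1 : 1 ≤ s := by rw [hs, Real.one_le_sqrt]; exact hN1
  have hsN : s ^ 2 = N := Real.sq_sqrt hN0.le
  set S := sqDev ρ (fun k => (n k : ℝ) / N) with hS
  have hS0 : 0 ≤ S := sqDev_nonneg _ _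
  set W := ((Finset.univ.filter fun σ : Fin N → Fin (d + 1) => spinCount σ = n).card : ℝ) *
        (∏ k, ((n k : ℝ) / N) ^ n k) with hW
  have hW0 : 0 ≤ W := by positivity
  by_cases hA : ∀ k, ρ k / 2 ≤ (n k : ℝ) / N
  · have h1 : W * ∏ k, Real.sqrt (n k) ≤ Real.exp 1 * s := card_fiber_stirling hN n hn
    have h2 : s ^ (d + 1) * c ≤ ∏ k, Real.sqrt (n k) := by
      have : s ^ (d + 1) * c = ∏ k : Fin (d + 1), (s * Real.sqrt (ρ k / 2)) := by
        rw [Finset.prod_mul_distrib]; simp [hc]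
      rw [this]
      refine Finset.prod_le_prod (fun k _ => by positivity) fun k _ => ?_
      rw [hs, ← Real.sqrt_mul hN0.le]
      refine Real.sqrt_le_sqrt ?_
      have := (le_div_iff₀ hN0).1 (hA k)
      linarith
    have h3 : W ≤ Real.exp 1 / c / s ^ d := by
      rw [div_div, le_div_iff₀ (by positivity)]
      have h4 := (mul_le_mul_of_nonneg_left h2 hW0).trans h1
      refine le_of_mul_le_mul_right ?_ hs0
      calc _ = W * (s ^ (d + 1) * c) := by ring
        _ ≤ _ := h4
    have h5 : Real.exp 1 / c / s ^ d ≤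
        (Real.exp 1 / c + ∑ k, (d.factorial : ℝ) / b k ^ d) / s ^ d := by
      gcongr
      linarith
    refine mul_le_mul (h3.trans h5) ?_ (Real.exp_pos _).le (by positivity)
    rw [Real.exp_le_exp]
    have : 0 ≤ ε * (N * S) := by positivity
    linarith
  · push Not at hA
    obtain ⟨k, hk⟩ := hA
    have h1 : W ≤ 1 := card_fiber_le_one hN n hn
    have h2 : (ρ k / 2) ^ 2 ≤ S := by
      refine le_trans ?_ (Finset.single_le_sum (f := fun k => ((n k : ℝ) / N - ρ k) ^ 2)
        (fun k _ => sq_nonneg _) (Finset.mem_univ k))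
      have := hρ k
      have h0 : 0 ≤ (n k : ℝ) / N := by positivity
      nlinarith
    have h3 : b k * N ≤ ε / 2 * (N * S) := by
      calc b k * N = ε / 2 * (N * (ρ k / 2) ^ 2) := by simp only [b]; ring
        _ ≤ _ := by gcongr
    have h4 : Real.exp (-(ε / 2 * (N * S))) ≤ (d.factorial : ℝ) / b k ^ d / s ^ d := by
      have h5 := Real.pow_div_factorial_le_exp (b k * N) (mul_pos (hb k) hN0).le d
      have h6 : Real.exp (-(ε / 2 * (N * S))) ≤ (Real.exp (b k * N))⁻¹ := by
        rw [← Real.exp_neg, Real.exp_le_exp]; linarith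
      have hbk := hb k
      refine h6.trans ?_
      calc (Real.exp (b k * N))⁻¹ ≤ ((b k * s) ^ d / (d.factorial : ℝ))⁻¹ := by
            refine inv_anti₀ (by positivity) (le_trans ?_ h5)
            gcongr
            nlinarith
        _ = _ := by rw [inv_div, mul_pow, div_div]
    have h7 : Real.exp (-(ε * (N * S))) =
        Real.exp (-(ε / 2 * (N * S))) * Real.exp (-(ε / 2 * (N * S))) := by
      rw [← Real.exp_add]; congr 1; ring
    have h8 : (d.factorial : ℝ) / b k ^ d / s ^ d ≤
        (Real.exp 1 / c + ∑ k, (d.factorial : ℝ) / b k ^ d) / s ^ d := by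
      have h9 := Finset.single_le_sum (f := fun k => (d.factorial : ℝ) / b k ^ d)
        (fun k _ => (hKb k).le) (Finset.mem_univ k)
      have h10 : 0 < Real.exp 1 / c := by positivity
      gcongr
      linarith
    rw [h7, ← mul_assoc]
    refine mul_le_mul_of_nonneg_right ?_ (Real.exp_pos _).le
    calc W * Real.exp (-(ε / 2 * (N * S))) ≤ 1 * Real.exp (-(ε / 2 * (N * S))) :=
          mul_le_mul_of_nonneg_right h1 (Real.exp_pos _).le
      _ ≤ _ := by rw [one_mul]; exact h4.trans h8

/-- The Laplace-type bound: summing the local limit bound over all possible counts gives a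
quantity that stays bounded in `N`. -/
lemma gaussian_partition_bounded {d : ℕ} (ρ : Fin (d + 1) → ℝ) (hρ : ∀ k, 0 < ρ k) (ε : ℝ)
    (hε : 0 < ε) : ∃ K > 0, ∀ N : ℕ, 1 ≤ N →
      ∑ σ : Fin N → Fin (d + 1), Real.exp (N * negEnt (mag σ)) *
        Real.exp (-(ε * (N * sqDev ρ (mag σ)))) ≤ K := by
  classical
  obtain ⟨K₁, hK₁, h₁⟩ := fiber_weight_le ρ hρ ε hε
  obtain ⟨K₂, hK₂, h₂⟩ := gaussian_sum_le (ε / 2) (by positivity)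
  refine ⟨K₁ * K₂ ^ d, by positivity, ?_⟩
  intro N hN
  have hN0 : (0 : ℝ) < N := by positivity
  have hs0 : 0 < Real.sqrt N := Real.sqrt_pos.2 hN0
  let I : Finset (Fin (d + 1) → ℕ) := Finset.univ.image fun σ : Fin N → Fin (d + 1) => spinCount σ
  have hI : ∀ n ∈ I, ∑ k, n k = N := by
    intro n hn
    obtain ⟨σ, _, rfl⟩ := Finset.mem_image.1 hn
    exact sum_spinCount σ
  let w : (Fin (d + 1) → ℕ) → ℝ := fun n => (∏ k, ((n k : ℝ) / N) ^ n k) *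
    Real.exp (-(ε * (N * sqDev ρ (fun k => (n k : ℝ) / N))))
  let g : (Fin d → ℕ) → ℝ := fun y =>
    ∏ k, Real.exp (-(ε / 2 * ((y k : ℝ) - N * ρ k.castSucc) ^ 2 / N))
  have hg0 : ∀ y, 0 ≤ g y := fun y => Finset.prod_nonneg fun k _ => (Real.exp_pos _).le
  have hgauss : ∀ n : Fin (d + 1) → ℕ,
      Real.exp (-(ε / 2 * (N * sqDev ρ (fun k => (n k : ℝ) / N)))) ≤
        g (fun k => n k.castSucc) := by
    intro n
    simp only [g]
    rw [← Real.exp_sum, Real.exp_le_exp, Finset.sum_neg_distrib, neg_le_neg_iff, sqDev,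
      Fin.sum_univ_castSucc, mul_add, mul_add, Finset.mul_sum, Finset.mul_sum]
    have h0 : 0 ≤ ε / 2 * (N * ((n (Fin.last d) : ℝ) / N - ρ (Fin.last d)) ^ 2) := by positivity
    refine le_trans (le_of_eq ?_) (le_add_of_nonneg_right h0)
    refine Finset.sum_congr rfl fun k _ => ?_
    field_simp
  have hmaps : (I.image fun n k => n (Fin.castSucc k)) ⊆
      Fintype.piFinset fun _ : Fin d => Finset.range (N + 1) := by
    intro y hy
    obtain ⟨n, hn, rfl⟩ := Finset.mem_image.1 hy
    rw [Fintype.mem_piFinset]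
    intro k
    rw [Finset.mem_range, Nat.lt_succ_iff, ← hI n hn]
    exact Finset.single_le_sum (f := n) (fun _ _ => Nat.zero_le _) (Finset.mem_univ _)
  -- the last count is determined by the others, since the counts add up to `N`
  have hinj : Set.InjOn (fun (n : Fin (d + 1) → ℕ) (k : Fin d) => n (Fin.castSucc k)) I := by
    intro n hn m hm hnm
    have e : ∀ k : Fin d, n k.castSucc = m k.castSucc := fun k => congrFun hnm k
    have h3 := (hI n hn).trans (hI m hm).symm
    rw [Fin.sum_univ_castSucc, Fin.sum_univ_castSucc, Finset.sum_congr rfl fun k _ => e k] at h3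
    funext k
    refine Fin.lastCases ?_ (fun k => e k) k
    omega
  calc _ = ∑ σ : Fin N → Fin (d + 1), w (spinCount σ) := by
        refine Finset.sum_congr rfl fun σ _ => ?_
        rw [exp_negEnt_mag hN σ]
        rfl
    _ = ∑ n ∈ I,
        ((Finset.univ.filter fun σ : Fin N → Fin (d + 1) => spinCount σ = n).card : ℝ) * w n := by
        rw [Finset.sum_comp w (fun σ : Fin N → Fin (d + 1) => spinCount σ)]
        simp only [nsmul_eq_mul, I]
    _ ≤ ∑ n ∈ I, K₁ / Real.sqrt N ^ d * g (fun k => n k.castSucc) := by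
        refine Finset.sum_le_sum fun n hn => ?_
        simp only [w]
        rw [← mul_assoc]
        refine (h₁ N hN n (hI n hn)).trans ?_
        exact mul_le_mul_of_nonneg_left (hgauss n) (by positivity)
    _ = K₁ / Real.sqrt N ^ d * ∑ y ∈ I.image fun n k => n (Fin.castSucc k), g y := by
        rw [Finset.sum_image hinj, Finset.mul_sum]
    _ ≤ K₁ / Real.sqrt N ^ d *
        ∑ y ∈ Fintype.piFinset fun _ : Fin d => Finset.range (N + 1), g y := by
        refine mul_le_mul_of_nonneg_left ?_ (by positivity)
        exact Finset.sum_le_sum_of_subset_of_nonneg hmaps fun y _ _ => hg0 y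
    _ ≤ K₁ / Real.sqrt N ^ d * (K₂ * Real.sqrt N) ^ d := by
        refine mul_le_mul_of_nonneg_left ?_ (by positivity)
        simp only [g]
        rw [← Finset.prod_univ_sum (fun _ : Fin d => Finset.range (N + 1))
          (fun k j => Real.exp (-(ε / 2 * ((j : ℝ) - N * ρ k.castSucc) ^ 2 / N)))]
        calc _ ≤ ∏ _k : Fin d, (K₂ * Real.sqrt N) :=
              Finset.prod_le_prod (fun k _ => Finset.sum_nonneg fun j _ => (Real.exp_pos _).le)
                fun k _ => h₂ N hN _ (mul_nonneg hN0.le (hρ _).le)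
          _ = _ := by simp
    _ = K₁ * K₂ ^ d := by
        rw [mul_pow]
        field_simp

/-- The Kullback–Leibler divergence is at most the `χ²`-divergence, hence quadratic in `m - ρ`. -/
lemma kl_le_sqDev {q : ℕ} (ρ m : Fin q → ℝ) (hρ : ∀ k, 0 < ρ k) (hρ1 : ∑ k, ρ k = 1)
    (hm : ∀ k, 0 ≤ m k) (hm1 : ∑ k, m k = 1) :
    negEnt m - ∑ k, m k * Real.log (ρ k) ≤ (∑ k, 1 / ρ k) * sqDev ρ m := by
  have hterm : ∀ k, m k * Real.log (m k) - m k * Real.log (ρ k) ≤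
      (m k - ρ k) ^ 2 / ρ k + (m k - ρ k) := by
    intro k
    have hk := hρ k
    have e : (m k - ρ k) ^ 2 / ρ k + (m k - ρ k) = m k * (m k / ρ k - 1) := by
      field_simp
      ring
    rw [e]
    rcases (hm k).eq_or_lt with h | h
    · simp [← h]
    · rw [← mul_sub, ← Real.log_div h.ne' hk.ne']
      exact mul_le_mul_of_nonneg_left (Real.log_le_sub_one_of_pos (by positivity)) (hm k)
  rw [negEnt, ← Finset.sum_sub_distrib]
  calc _ ≤ ∑ k, ((m k - ρ k) ^ 2 / ρ k + (m k - ρ k)) := Finset.sum_le_sum fun k _ => hterm k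
    _ = ∑ k, 1 / ρ k * (m k - ρ k) ^ 2 := by
        rw [Finset.sum_add_distrib, Finset.sum_sub_distrib, hm1, hρ1, sub_self, add_zero]
        exact Finset.sum_congr rfl fun k _ => by ring
    _ ≤ ∑ k, 1 / ρ k * sqDev ρ m := by
        refine Finset.sum_le_sum fun k _ => ?_
        have hk := hρ k
        refine mul_le_mul_of_nonneg_left ?_ (by positivity)
        exact Finset.single_le_sum (f := fun k => (m k - ρ k) ^ 2)
          (fun k _ => sq_nonneg _) (Finset.mem_univ k)
    _ = _ := by rw [Finset.sum_mul]

/-- The relative entropy of the Gibbs measure with respect to `ρ ^ N` is bounded in `N`, as soon as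
the free energy `F + ent` has a quadratically separated maximum at `ρ` and `F` has a quadratic
lower bound at `ρ`. -/
lemma relEnt_gibbs_bounded {d : ℕ} (F : (Fin (d + 1) → ℝ) → ℝ) (ρ : Fin (d + 1) → ℝ)
    (hρ : ∀ k, 0 < ρ k) (hρ1 : ∑ k, ρ k = 1) (ε : ℝ) (hε : 0 < ε)
    (hup : ∀ m : Fin (d + 1) → ℝ, (∀ k, 0 ≤ m k) → ∑ k, m k = 1 →
      F m - negEnt m ≤ F ρ - negEnt ρ - ε * sqDev ρ m)
    (L : Fin (d + 1) → ℝ) (A : ℝ) (hA : 0 ≤ A)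
    (hlow : ∀ m : Fin (d + 1) → ℝ, (∀ k, 0 ≤ m k) → ∑ k, m k = 1 →
      F ρ + ∑ k, L k * (m k - ρ k) - A * sqDev ρ m ≤ F m) :
    ∃ C ≥ 0, ∀ N : ℕ, 1 ≤ N →
      relEnt (fun σ : Fin N → Fin (d + 1) => Real.exp (N * F (mag σ)) /
          ∑ σ' : Fin N → Fin (d + 1), Real.exp (N * F (mag σ')))
        (fun σ => ∏ i, ρ (σ i)) ≤ C := by
  obtain ⟨K, hK, hKN⟩ := gaussian_partition_bounded ρ hρ (ε / 2) (by positivity)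
  set D : ℝ := ∑ k, 1 / ρ k with hD
  have hD0 : 0 ≤ D := Finset.sum_nonneg fun k _ => by have := hρ k; positivity
  refine ⟨A + D * (Real.exp A * (2 / ε) * K), by positivity, ?_⟩
  intro N hN
  have hN0 : (0 : ℝ) < N := by positivity
  set Z : ℝ := ∑ σ' : Fin N → Fin (d + 1), Real.exp (N * F (mag σ')) with hZ
  have hZ0 : 0 < Z := Finset.sum_pos (fun _ _ => Real.exp_pos _) Finset.univ_nonempty
  have hR : ∀ σ : Fin N → Fin (d + 1), 0 < ∏ i, ρ (σ i) :=
    fun σ => Finset.prod_pos fun i _ => hρ _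
  have hR1 : ∑ σ : Fin N → Fin (d + 1), ∏ i, ρ (σ i) = 1 := by
    rw [← Fintype.sum_pow ρ N, hρ1, one_pow]
  have hlogR : ∀ σ : Fin N → Fin (d + 1),
      Real.log (∏ i, ρ (σ i)) = N * ∑ k, mag σ k * Real.log (ρ k) := by
    intro σ
    rw [Real.log_prod fun i _ => (hρ _).ne', sum_comp_eq_mag hN σ (fun k => Real.log (ρ k))]
  set g := F ρ - negEnt ρ with hg
  -- Gibbs' variational principle, tested on the product measure `ρ ^ N`
  have hlogZ : N * g - A ≤ Real.log Z := by
    have h1 := gibbs_inequality (fun σ : Fin N → Fin (d + 1) => ∏ i, ρ (σ i))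
      (fun σ => Real.exp (N * F (mag σ))) hR hR1 (fun _ => Real.exp_pos _)
    refine le_trans ?_ h1
    have hterm : ∀ σ : Fin N → Fin (d + 1),
        (∏ i, ρ (σ i)) * (N * g) +
          N * ((∏ i, ρ (σ i)) * ∑ k, (L k - Real.log (ρ k)) * (mag σ k - ρ k)) -
          A * (N * ((∏ i, ρ (σ i)) * sqDev ρ (mag σ))) ≤
        (∏ i, ρ (σ i)) * (Real.log (Real.exp (N * F (mag σ))) - Real.log (∏ i, ρ (σ i))) := by
      intro σ
      rw [Real.log_exp, hlogR σ]
      have h2 := hlow (mag σ) (mag_nonneg σ) (sum_mag hN σ)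
      have e : ∑ k, (L k - Real.log (ρ k)) * (mag σ k - ρ k) =
          ∑ k, L k * (mag σ k - ρ k) - ∑ k, mag σ k * Real.log (ρ k) + negEnt ρ := by
        rw [negEnt, ← Finset.sum_sub_distrib, ← Finset.sum_add_distrib]
        exact Finset.sum_congr rfl fun k _ => by ring
      rw [e]
      have h3 : N * (F ρ + ∑ k, L k * (mag σ k - ρ k) - A * sqDev ρ (mag σ)) ≤
          N * F (mag σ) := mul_le_mul_of_nonneg_left h2 hN0.le
      have h4 := mul_le_mul_of_nonneg_left h3 (hR σ).le
      rw [hg]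
      linarith
    refine le_trans ?_ (Finset.sum_le_sum fun σ _ => hterm σ)
    rw [Finset.sum_sub_distrib, Finset.sum_add_distrib, ← Finset.sum_mul, hR1, ← Finset.mul_sum,
      ← Finset.mul_sum, ← Finset.mul_sum,
      expect_linear_mag hN ρ (fun k => L k - Real.log (ρ k)) hρ1]
    have := mul_le_mul_of_nonneg_left (expect_sqDev_le hN ρ hρ1) hA
    linarith
  have hP1 : ∑ σ : Fin N → Fin (d + 1), Real.exp (N * F (mag σ)) / Z = 1 := by
    rw [← Finset.sum_div, ← hZ, div_self hZ0.ne']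
  have hZinv : 1 / Z ≤ Real.exp A * Real.exp (-(N * g)) := by
    rw [← Real.exp_log hZ0, one_div, ← Real.exp_neg, ← Real.exp_add, Real.exp_le_exp]
    linarith
  have hmoment : ∀ σ : Fin N → Fin (d + 1),
      Real.exp (N * F (mag σ)) / Z * (N * sqDev ρ (mag σ)) ≤
        Real.exp A * (2 / ε) * (Real.exp (N * negEnt (mag σ)) *
          Real.exp (-(ε / 2 * (N * sqDev ρ (mag σ))))) := by
    intro σ
    set T := N * sqDev ρ (mag σ) with hT
    have hT0 : 0 ≤ T := mul_nonneg hN0.le (sqDev_nonneg _ _)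
    have h1 : Real.exp (N * F (mag σ)) ≤
        Real.exp (N * g) * Real.exp (N * negEnt (mag σ)) * Real.exp (-(ε * T)) := by
      rw [← Real.exp_add, ← Real.exp_add, Real.exp_le_exp]
      have := mul_le_mul_of_nonneg_left (hup (mag σ) (mag_nonneg σ) (sum_mag hN σ)) hN0.le
      rw [hT, hg]
      linarith
    have h2 : T ≤ 2 / ε * Real.exp (ε / 2 * T) := by
      have h3 := Real.add_one_le_exp (ε / 2 * T)
      have h4 : 2 / ε * (ε / 2 * T) = T := by field_simp
      have h5 := mul_le_mul_of_nonneg_left (by linarith : ε / 2 * T ≤ Real.exp (ε / 2 * T))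
        (by positivity : 0 ≤ 2 / ε)
      linarith
    calc Real.exp (N * F (mag σ)) / Z * T = Real.exp (N * F (mag σ)) * (1 / Z) * T := by ring
      _ ≤ (Real.exp (N * g) * Real.exp (N * negEnt (mag σ)) * Real.exp (-(ε * T))) *
          (Real.exp A * Real.exp (-(N * g))) * (2 / ε * Real.exp (ε / 2 * T)) := by gcongr
      _ = Real.exp A * (2 / ε) * (Real.exp (N * negEnt (mag σ)) *
          (Real.exp (-(ε * T)) * Real.exp (ε / 2 * T))) *
          (Real.exp (N * g) * Real.exp (-(N * g))) := by ring
      _ = _ := by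
        rw [← Real.exp_add (N * g), add_neg_cancel, Real.exp_zero, mul_one, ← Real.exp_add]
        congr 4
        ring
  have hsum : ∑ σ : Fin N → Fin (d + 1),
      Real.exp (N * F (mag σ)) / Z * (N * sqDev ρ (mag σ)) ≤ Real.exp A * (2 / ε) * K := by
    refine (Finset.sum_le_sum fun σ _ => hmoment σ).trans ?_
    rw [← Finset.mul_sum]
    exact mul_le_mul_of_nonneg_left (hKN N hN) (by positivity)
  have hrel : ∀ σ : Fin N → Fin (d + 1),
      Real.exp (N * F (mag σ)) / Z *
        Real.log (Real.exp (N * F (mag σ)) / Z / ∏ i, ρ (σ i)) ≤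
      Real.exp (N * F (mag σ)) / Z * A +
        D * (Real.exp (N * F (mag σ)) / Z * (N * sqDev ρ (mag σ))) := by
    intro σ
    have hp : 0 < Real.exp (N * F (mag σ)) / Z := by positivity
    have h1 : Real.log (Real.exp (N * F (mag σ)) / Z / ∏ i, ρ (σ i)) ≤
        A + D * (N * sqDev ρ (mag σ)) := by
      rw [Real.log_div hp.ne' (hR σ).ne', Real.log_div (Real.exp_pos _).ne' hZ0.ne', Real.log_exp,
        hlogR σ]
      have h2 := mul_le_mul_of_nonneg_left
        (kl_le_sqDev ρ (mag σ) hρ hρ1 (mag_nonneg σ) (sum_mag hN σ)) hN0.le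
      have h3 := mul_le_mul_of_nonneg_left
        (hup (mag σ) (mag_nonneg σ) (sum_mag hN σ)) hN0.le
      have h4 : 0 ≤ N * (ε * sqDev ρ (mag σ)) :=
        mul_nonneg hN0.le (mul_nonneg hε.le (sqDev_nonneg _ _))
      rw [← hD] at h2
      linarith
    have := mul_le_mul_of_nonneg_left h1 hp.le
    linarith
  rw [relEnt]
  refine (Finset.sum_le_sum fun σ _ => hrel σ).trans ?_
  rw [Finset.sum_add_distrib, ← Finset.sum_mul, hP1, ← Finset.mul_sum, one_mul]
  have := mul_le_mul_of_nonneg_left hsum hD0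
  linarith

/-! ### Second-order estimates for the free energy -/

/-- Second-order Taylor expansion at a point of a function of class `C²`. -/
lemma taylor_second_order {E : Type*} [NormedAddCommGroup E] [NormedSpace ℝ E] (f : E → ℝ) (a : E)
    (hf : ContDiffAt ℝ 2 f a) (η : ℝ) (hη : 0 < η) :
    ∃ δ > 0, ∀ v : E, ‖v‖ < δ →
      |f (a + v) - f a - fderiv ℝ f a v - 1 / 2 * fderiv ℝ (fderiv ℝ f) a v v| ≤
        η * ‖v‖ ^ 2 := by
  have h1 : DifferentiableAt ℝ (fderiv ℝ f) a :=
    (hf.fderiv_right (m := 1) (by norm_num)).differentiableAt (by norm_num)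
  have h2 : ∀ᶠ x in nhds a, DifferentiableAt ℝ f x := by
    filter_upwards [hf.eventually (by simp)] with x hx
    exact hx.differentiableAt (by norm_num)
  have h3 := h1.hasFDerivAt.isLittleO.def hη
  obtain ⟨δ, hδ, h4⟩ := Metric.eventually_nhds_iff.1 (h2.and h3)
  refine ⟨δ, hδ, fun v hv => ?_⟩
  -- the remainder along the segment from `a` to `a + v`
  set φ : ℝ → ℝ := fun t => f (a + t • v) - t * fderiv ℝ f a v -
    t ^ 2 / 2 * fderiv ℝ (fderiv ℝ f) a v v with hφ
  have hball : ∀ t ∈ Set.Icc (0 : ℝ) 1, dist (a + t • v) a < δ := by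
    intro t ht
    rw [dist_eq_norm, add_sub_cancel_left, norm_smul, Real.norm_of_nonneg ht.1]
    nlinarith [norm_nonneg v, ht.2]
  have hd : ∀ t ∈ Set.Icc (0 : ℝ) 1, HasDerivAt φ (fderiv ℝ f (a + t • v) v - fderiv ℝ f a v -
      t * fderiv ℝ (fderiv ℝ f) a v v) t := by
    intro t ht
    have hg : HasDerivAt (fun t : ℝ => a + t • v) v t := by
      simpa using ((hasDerivAt_id t).smul_const v).const_add a
    have e1 := (h4 (hball t ht)).1.hasFDerivAt.comp_hasDerivAt t hg
    have e2 : HasDerivAt (fun t : ℝ => t * fderiv ℝ f a v) (fderiv ℝ f a v) t := by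
      simpa using (hasDerivAt_id t).mul_const (fderiv ℝ f a v)
    have e3 : HasDerivAt (fun t : ℝ => t ^ 2 / 2 * fderiv ℝ (fderiv ℝ f) a v v)
        (t * fderiv ℝ (fderiv ℝ f) a v v) t := by
      have := ((hasDerivAt_pow 2 t).div_const 2).mul_const (fderiv ℝ (fderiv ℝ f) a v v)
      exact this.congr_deriv (by simp)
    exact (e1.sub e2).sub e3
  have hbound : ∀ t ∈ Set.Ico (0 : ℝ) 1, ‖fderiv ℝ f (a + t • v) v - fderiv ℝ f a v -
      t * fderiv ℝ (fderiv ℝ f) a v v‖ ≤ η * ‖v‖ ^ 2 := by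
    intro t ht
    have ht' : t ∈ Set.Icc (0 : ℝ) 1 := ⟨ht.1, ht.2.le⟩
    have e1 := (h4 (hball t ht')).2
    rw [add_sub_cancel_left] at e1
    have e2 : fderiv ℝ f (a + t • v) v - fderiv ℝ f a v - t * fderiv ℝ (fderiv ℝ f) a v v =
        (fderiv ℝ f (a + t • v) - fderiv ℝ f a - fderiv ℝ (fderiv ℝ f) a (t • v)) v := by
      simp
    rw [e2]
    refine (ContinuousLinearMap.le_opNorm _ _).trans ?_
    refine (mul_le_mul_of_nonneg_right e1 (norm_nonneg v)).trans ?_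
    rw [norm_smul, Real.norm_of_nonneg ht.1]
    have : t * (η * ‖v‖ ^ 2) ≤ 1 * (η * ‖v‖ ^ 2) :=
      mul_le_mul_of_nonneg_right ht.2.le (by positivity)
    nlinarith
  have hmv := norm_image_sub_le_of_norm_deriv_le_segment_01'
    (fun t ht => (hd t ht).hasDerivWithinAt) hbound
  have e : φ 1 - φ 0 =
      f (a + v) - f a - fderiv ℝ f a v - 1 / 2 * fderiv ℝ (fderiv ℝ f) a v v := by
    simp only [hφ, one_smul, zero_smul, add_zero]
    ring
  rwa [e, Real.norm_eq_abs] at hmv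

/-- A strict maximum over a compact set which is locally of quadratic type is globally so. -/
lemma quadratic_max_on_compact {E : Type*} [NormedAddCommGroup E] (K : Set E) (hK : IsCompact K)
    (a : E) (h : E → ℝ) (hc : ContinuousOn h K) (hneg : ∀ x ∈ K, x ≠ a → h x < 0)
    (ε δ : ℝ) (hε : 0 < ε) (hδ : 0 < δ)
    (hloc : ∀ x, ‖x - a‖ < δ → h x ≤ -(ε * ‖x - a‖ ^ 2)) :
    ∃ ε' > 0, ∀ x ∈ K, h x ≤ -(ε' * ‖x - a‖ ^ 2) := by
  have hK' : IsCompact (K \ Metric.ball a δ) := hK.diff Metric.isOpen_ball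
  rcases (K \ Metric.ball a δ).eq_empty_or_nonempty with hem | hne
  · refine ⟨ε, hε, fun x hx => hloc x ?_⟩
    by_contra hxd
    have : x ∈ K \ Metric.ball a δ := ⟨hx, by rwa [Metric.mem_ball, dist_eq_norm]⟩
    rw [hem] at this
    exact this
  · obtain ⟨x₀, hx₀, hmax⟩ := hK'.exists_isMaxOn hne (hc.mono Set.sdiff_subset)
    have hx₀a : x₀ ≠ a := by
      rintro rfl
      exact hx₀.2 (Metric.mem_ball_self hδ)
    have h0 := hneg x₀ hx₀.1 hx₀a
    obtain ⟨R, hR⟩ := hK.isBounded.exists_norm_le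
    have hRa : ∀ x ∈ K, ‖x - a‖ ^ 2 ≤ (|R| + ‖a‖ + 1) ^ 2 := by
      intro x hx
      refine pow_le_pow_left₀ (norm_nonneg _) ?_ 2
      have := norm_sub_le x a
      have := hR x hx
      have := le_abs_self R
      linarith
    set Q := (|R| + ‖a‖ + 1) ^ 2 with hQ
    have hQ0 : 0 < Q := by positivity
    refine ⟨min ε (-h x₀ / Q), lt_min hε (div_pos (by linarith) hQ0), fun x hx => ?_⟩
    by_cases hxd : ‖x - a‖ < δ
    · have h1 := hloc x hxd
      have h2 := mul_le_mul_of_nonneg_right (min_le_left ε (-h x₀ / Q)) (sq_nonneg ‖x - a‖)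
      linarith
    · have h1 : h x ≤ h x₀ := hmax ⟨hx, by rwa [Metric.mem_ball, dist_eq_norm]⟩
      have h2 := mul_le_mul_of_nonneg_right (min_le_right ε (-h x₀ / Q)) (sq_nonneg ‖x - a‖)
      have h3 : -h x₀ / Q * ‖x - a‖ ^ 2 ≤ -h x₀ / Q * Q :=
        mul_le_mul_of_nonneg_left (hRa x hx) (div_pos (by linarith) hQ0).le
      rw [div_mul_cancel₀ _ hQ0.ne'] at h3
      linarith

lemma quadratic_lower_on_compact {E : Type*} [NormedAddCommGroup E] (K : Set E) (hK : IsCompact K)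
    (a : E) (h : E → ℝ) (hc : ContinuousOn h K) (A δ : ℝ) (hA : 0 ≤ A) (hδ : 0 < δ)
    (hloc : ∀ x, ‖x - a‖ < δ → -(A * ‖x - a‖ ^ 2) ≤ h x) :
    ∃ A' ≥ 0, ∀ x ∈ K, -(A' * ‖x - a‖ ^ 2) ≤ h x := by
  obtain ⟨R, hR⟩ := hK.exists_bound_of_continuousOn hc
  refine ⟨A + |R| / δ ^ 2, by positivity, fun x hx => ?_⟩
  have h0 : 0 ≤ |R| / δ ^ 2 * ‖x - a‖ ^ 2 := by positivity
  have h1 : 0 ≤ A * ‖x - a‖ ^ 2 := by positivity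
  by_cases hxd : ‖x - a‖ < δ
  · have := hloc x hxd
    linarith
  · push Not at hxd
    have h2 : |R| / δ ^ 2 * δ ^ 2 ≤ |R| / δ ^ 2 * ‖x - a‖ ^ 2 := by gcongr
    rw [div_mul_cancel₀ _ (by positivity)] at h2
    have h3 := hR x hx
    rw [Real.norm_eq_abs] at h3
    have := neg_abs_le (h x)
    have := le_abs_self R
    linarith

lemma contDiff_snoc {d : ℕ} :
    ContDiff ℝ 2 (fun x : Fin d → ℝ => (Fin.snoc x (1 - ∑ k, x k) : Fin (d + 1) → ℝ)) := by
  rw [contDiff_pi]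
  intro i
  refine Fin.lastCases ?_ (fun k => ?_) i
  · simp only [Fin.snoc_last]
    fun_prop
  · simp only [Fin.snoc_castSucc]
    fun_prop

lemma snoc_init_of_sum {d : ℕ} (m : Fin (d + 1) → ℝ) (hm1 : ∑ k, m k = 1) :
    (Fin.snoc (fun k : Fin d => m k.castSucc) (1 - ∑ k : Fin d, m k.castSucc) :
      Fin (d + 1) → ℝ) = m := by
  rw [Fin.sum_univ_castSucc] at hm1
  funext i
  refine Fin.lastCases ?_ (fun k => ?_) i
  · simp only [Fin.snoc_last]
    linarith
  · simp only [Fin.snoc_castSucc]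

lemma norm_sq_le_sum_sq {d : ℕ} (v : Fin d → ℝ) : ‖v‖ ^ 2 ≤ ∑ k, v k ^ 2 := by
  rw [← Real.le_sqrt (norm_nonneg _) (Finset.sum_nonneg fun _ _ => sq_nonneg _),
    pi_norm_le_iff_of_nonneg (Real.sqrt_nonneg _)]
  intro k
  rw [Real.le_sqrt (norm_nonneg _) (Finset.sum_nonneg fun _ _ => sq_nonneg _), Real.norm_eq_abs,
    sq_abs]
  exact Finset.single_le_sum (f := fun k => v k ^ 2) (fun _ _ => sq_nonneg _) (Finset.mem_univ k)

lemma norm_sq_le_sqDev {d : ℕ} (x y : Fin d → ℝ) :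
    ‖x - y‖ ^ 2 ≤ sqDev (Fin.snoc y (1 - ∑ k, y k)) (Fin.snoc x (1 - ∑ k, x k)) := by
  refine (norm_sq_le_sum_sq (x - y)).trans ?_
  rw [sqDev, Fin.sum_univ_castSucc]
  simp only [Fin.snoc_castSucc, Pi.sub_apply]
  exact le_add_of_nonneg_right (sq_nonneg _)

lemma sqDev_le_norm_sq {d : ℕ} (x y : Fin d → ℝ) :
    sqDev (Fin.snoc y (1 - ∑ k, y k)) (Fin.snoc x (1 - ∑ k, x k)) ≤
      (d + (d : ℝ) ^ 2) * ‖x - y‖ ^ 2 := by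
  have hk : ∀ k, |x k - y k| ≤ ‖x - y‖ := fun k => by
    have := norm_le_pi_norm (x - y) k
    simpa using this
  rw [sqDev, Fin.sum_univ_castSucc]
  simp only [Fin.snoc_castSucc, Fin.snoc_last]
  have h1 : ∑ k, (x k - y k) ^ 2 ≤ d * ‖x - y‖ ^ 2 := by
    refine (Finset.sum_le_sum (g := fun _ => ‖x - y‖ ^ 2) fun k _ => ?_).trans (by simp)
    rw [← sq_abs]
    exact pow_le_pow_left₀ (abs_nonneg _) (hk k) 2
  have h2 : |∑ k, (x k - y k)| ≤ d * ‖x - y‖ := by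
    refine (Finset.abs_sum_le_sum_abs _ _).trans ?_
    exact (Finset.sum_le_sum fun k _ => hk k).trans (by simp)
  have h3 : (1 - ∑ k, x k - (1 - ∑ k, y k)) ^ 2 ≤ (d * ‖x - y‖) ^ 2 := by
    have e : 1 - ∑ k, x k - (1 - ∑ k, y k) = -∑ k, (x k - y k) := by
      rw [Finset.sum_sub_distrib]; ring
    rw [e, neg_sq, ← sq_abs]
    exact pow_le_pow_left₀ (abs_nonneg _) h2 2
  linarith

lemma neg_definite_bound {E : Type*} [NormedAddCommGroup E] [NormedSpace ℝ E]
    [FiniteDimensional ℝ E] (T : E →L[ℝ] E →L[ℝ] ℝ) (hT : ∀ v, v ≠ 0 → T v v < 0) :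
    ∃ l > 0, ∀ v, T v v ≤ -(l * ‖v‖ ^ 2) := by
  rcases (Metric.sphere (0 : E) 1).eq_empty_or_nonempty with hem | hne
  · refine ⟨1, one_pos, fun v => ?_⟩
    have hv : v = 0 := by
      by_contra hv
      have : ‖v‖⁻¹ • v ∈ Metric.sphere (0 : E) 1 := by
        rw [mem_sphere_zero_iff_norm, norm_smul, norm_inv, norm_norm,
          inv_mul_cancel₀ (norm_ne_zero_iff.2 hv)]
      rw [hem] at this
      exact this
    simp [hv]
  · obtain ⟨u, hu, hmax⟩ := (isCompact_sphere (0 : E) 1).exists_isMaxOn hne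
      (f := fun v => T v v) (by fun_prop)
    have hu0 : u ≠ 0 := by
      rintro rfl
      simp at hu
    refine ⟨-T u u, by linarith [hT u hu0], fun v => ?_⟩
    rcases eq_or_ne v 0 with rfl | hv
    · simp
    · have hn : ‖v‖ ≠ 0 := norm_ne_zero_iff.2 hv
      have hmem : ‖v‖⁻¹ • v ∈ Metric.sphere (0 : E) 1 := by
        rw [mem_sphere_zero_iff_norm, norm_smul, norm_inv, norm_norm, inv_mul_cancel₀ hn]
      have h1 : T (‖v‖⁻¹ • v) (‖v‖⁻¹ • v) ≤ T u u := hmax hmem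
      simp only [map_smul, smul_eq_mul, smul_apply] at h1
      have h2 : 0 < ‖v‖ ^ 2 := by positivity
      have h3 := mul_le_mul_of_nonneg_right h1 h2.le
      have e : ‖v‖⁻¹ * (‖v‖⁻¹ * T v v) * ‖v‖ ^ 2 = T v v := by field_simp
      linarith

/-! ### Relative entropy of the marginals of the Gibbs measure -/

/-- Assume (A) and (B) hold with `p = 1`, i.e. `G` has a unique
non-degenerate global maximizer `M = M_1` in the interior of `Δ̂`. With
`ρ(l) = M_{1,l}` on `{1,…,q}`, there is a constant `c > 0` such that for all `N`
and all `1 ≤ k ≤ N` the `k`-marginal of the Gibbs measure satisfies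
`H(μ_N^{(k)} | ρ^{⊗k}) ≤ c k / N`. Here `q = d + 1`, `d ≥ 1`. -/
theorem stmt_4
    (d : ℕ) (hd : 1 ≤ d)
    (F : (Fin (d + 1) → ℝ) → ℝ)
    (hF : ContDiffOn ℝ 2 F {m : Fin (d + 1) → ℝ | (∀ k, 0 ≤ m k) ∧ ∑ k, m k = 1})
    (ent : (Fin (d + 1) → ℝ) → ℝ)
    (hent : ∀ m, ent m = -∑ k, m k * Real.log (m k))
    (G : (Fin d → ℝ) → ℝ)
    (hG : ∀ x : Fin d → ℝ,
      G x = F (Fin.snoc x (1 - ∑ k, x k)) + ent (Fin.snoc x (1 - ∑ k, x k)))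
    (Δhat : Set (Fin d → ℝ))
    (hΔhat : Δhat = {x : Fin d → ℝ | (∀ k, 0 ≤ x k) ∧ ∑ k, x k ≤ 1})
    -- (A): the global maximizers of `G` on `Δ̂` are exactly the `p` distinct points
    -- `M 1, …, M p`, all lying in the interior of `Δ̂`
    (M : Fin 1 → Fin d → ℝ)
        (hMint : ∀ j, M j ∈ interior Δhat)
    (hMmax : ∀ j, ∀ x ∈ Δhat, G x ≤ G (M j))
    (hMonly : ∀ x ∈ Δhat, (∀ y ∈ Δhat, G y ≤ G x) → ∃ j, x = M j)
    -- (B): `H_j = -Hess G (M_j)` is positive definite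
    (H : Fin 1 → Matrix (Fin d) (Fin d) ℝ)
    (hH : ∀ j k l, H j k l =
      -(fderiv ℝ (fun x => fderiv ℝ G x (Pi.single l 1)) (M j)) (Pi.single k 1))
    (hHpd : ∀ j, (H j).PosDef)
    (Mfull : Fin 1 → Fin (d + 1) → ℝ)
    (hMfull : ∀ j, Mfull j = Fin.snoc (M j) (1 - ∑ k, M j k))
    (w : Fin 1 → ℝ)
    (hw : ∀ j, w j = (Real.sqrt ((H j).det * ∏ k, Mfull j k))⁻¹)
    (Z : ℕ → ℝ)
    (hZ : ∀ N : ℕ, Z N = ∑ σ : Fin N → Fin (d + 1),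
      Real.exp ((N : ℝ) * F (fun k => ((Finset.univ.filter fun i => σ i = k).card : ℝ) / N)))
    (μ : ∀ N : ℕ, (Fin N → Fin (d + 1)) → ℝ)
    (hμ : ∀ N σ, μ N σ =
      Real.exp ((N : ℝ) * F (fun k => ((Finset.univ.filter fun i => σ i = k).card : ℝ) / N)) / Z N) :
    ∃ c > (0 : ℝ), ∀ N : ℕ, ∀ k : ℕ, 1 ≤ k → ∀ hk : k ≤ N,
      relEnt
        (fun τ : Fin k → Fin (d + 1) => ∑ σ : Fin N → Fin (d + 1),
          if ∀ i : Fin k, σ (Fin.castLE hk i) = τ i then μ N σ else 0)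
        (fun τ : Fin k → Fin (d + 1) => ∏ i, Mfull 0 (τ i)) ≤ c * k / N := by
  classical
  set a := M 0 with ha
  -- positivity of the maximizer
  have haΔ : a ∈ Δhat := interior_subset (hMint 0)
  obtain ⟨δ, hδ, hball⟩ := Metric.isOpen_iff.1 isOpen_interior a (hMint 0)
  have hmem : ∀ t : ℝ, |t| < δ → (fun k => a k + t) ∈ Δhat := by
    intro t ht
    refine interior_subset (hball ?_)
    rw [Metric.mem_ball, dist_pi_lt_iff hδ]
    intro k
    rw [Real.dist_eq, add_sub_cancel_left]
    exact ht
  have hapos : ∀ k, 0 < a k := by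
    intro k
    have h := hmem (-(δ / 2)) (by rw [abs_neg, abs_of_pos (by linarith)]; linarith)
    rw [hΔhat] at h
    have := h.1 k
    linarith
  have halt : ∑ k, a k < 1 := by
    have h := hmem (δ / 2) (by rw [abs_of_pos (by linarith)]; linarith)
    rw [hΔhat] at h
    have h2 := h.2
    rw [Finset.sum_add_distrib] at h2
    simp only [Finset.sum_const, Finset.card_univ, Fintype.card_fin, nsmul_eq_mul] at h2
    have h3 : (1 : ℝ) ≤ d := by exact_mod_cast hd
    nlinarith
  set s : (Fin d → ℝ) → (Fin (d + 1) → ℝ) := fun x => Fin.snoc x (1 - ∑ k, x k) with hs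
  have hsΔ : Set.MapsTo s Δhat {m : Fin (d + 1) → ℝ | (∀ k, 0 ≤ m k) ∧ ∑ k, m k = 1} := by
    intro x hx
    rw [hΔhat] at hx
    refine ⟨fun k => ?_, ?_⟩
    · refine Fin.lastCases ?_ (fun k => ?_) k
      · simp only [hs, Fin.snoc_last]; linarith [hx.2]
      · simp only [hs, Fin.snoc_castSucc]; exact hx.1 k
    · rw [Fin.sum_univ_castSucc]
      simp [hs]
  set ρ := s a with hρdef
  have hρM : Mfull 0 = ρ := hMfull 0
  have hρpos : ∀ k, 0 < ρ k := by
    intro k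
    refine Fin.lastCases ?_ (fun k => ?_) k
    · simp only [hρdef, hs, Fin.snoc_last]; linarith
    · simp only [hρdef, hs, Fin.snoc_castSucc]; exact hapos k
  have hρ1 : ∑ k, ρ k = 1 := (hsΔ haΔ).2
  -- regularity of `F` and `G` in the reduced coordinates
  set f : (Fin d → ℝ) → ℝ := fun x => F (s x) with hf
  have hfOn : ContDiffOn ℝ 2 f Δhat := hF.comp contDiff_snoc.contDiffOn hsΔ
  have hfa : ContDiffAt ℝ 2 f a := hfOn.contDiffAt (mem_interior_iff_mem_nhds.1 (hMint 0))
  have hGeq : G = fun x => f x - negEnt (s x) := by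
    funext x
    rw [hG, hent, negEnt]
    exact (sub_eq_add_neg _ _).symm
  have hscont : Continuous s := contDiff_snoc.continuous
  have hnegc : Continuous fun x => negEnt (s x) := by
    unfold negEnt
    refine continuous_finsetSum _ fun k _ => ?_
    exact Real.continuous_mul_log.comp ((continuous_apply k).comp hscont)
  have hGc : ContinuousOn G Δhat := by
    rw [hGeq]
    exact hfOn.continuousOn.sub hnegc.continuousOn
  have hGa : ContDiffAt ℝ 2 G a := by
    rw [hGeq]
    refine hfa.sub ?_
    unfold negEnt
    refine ContDiffAt.sum fun k _ => ?_
    have hk : ContDiffAt ℝ 2 (fun x => s x k) a :=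
      (contDiff_pi.1 contDiff_snoc k).contDiffAt
    exact hk.mul (hk.log (hρpos k).ne')
  have hcompact : IsCompact Δhat := by
    have hcube := isCompact_univ_pi (fun _ : Fin d => isCompact_Icc (a := (0 : ℝ)) (b := 1))
    refine hcube.of_isClosed_subset ?_ ?_
    · rw [hΔhat]
      have h1 : IsClosed {x : Fin d → ℝ | ∀ k, 0 ≤ x k} := by
        simp only [Set.ofPred_forall]
        exact isClosed_iInter fun k => isClosed_le continuous_const (continuous_apply k)
      have h2 : IsClosed {x : Fin d → ℝ | ∑ k, x k ≤ 1} :=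
        isClosed_le (continuous_finsetSum _ fun k _ => continuous_apply k) continuous_const
      exact h1.inter h2
    · intro x hx
      rw [hΔhat] at hx
      refine fun k _ => ⟨hx.1 k, le_trans ?_ hx.2⟩
      exact Finset.single_le_sum (f := x) (fun j _ => hx.1 j) (Finset.mem_univ k)
  -- the Hessian of `G` at the maximizer is negative definite
  have hcrit : fderiv ℝ G a = 0 := by
    refine IsLocalMax.fderiv_eq_zero ?_
    filter_upwards [mem_interior_iff_mem_nhds.1 (hMint 0)] with x hx
    exact hMmax 0 x hx
  have hG2 : DifferentiableAt ℝ (fderiv ℝ G) a :=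
    (hGa.fderiv_right (m := 1) (by norm_num)).differentiableAt (by norm_num)
  set T := fderiv ℝ (fderiv ℝ G) a with hT
  have hTH : ∀ k l, H 0 k l = -T (Pi.single k 1) (Pi.single l 1) := by
    intro k l
    rw [hH 0 k l, fderiv_clm_apply hG2 (differentiableAt_const _)]
    simp [hT]
  have hTneg : ∀ v, v ≠ 0 → T v v < 0 := by
    intro v hv
    have h1 := (hHpd 0).dotProduct_mulVec_pos hv
    have h2 : T v v = -(star v ⬝ᵥ (H 0).mulVec v) := by
      have hvs : v = ∑ k, v k • (Pi.single k 1 : Fin d → ℝ) := by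
        simpa using (pi_eq_sum_univ' v)
      conv_lhs => rw [hvs]
      simp only [map_sum, map_smul, sum_apply, smul_apply, smul_eq_mul]
      simp only [dotProduct, Matrix.mulVec, hTH, ← Finset.sum_neg_distrib, Finset.mul_sum,
        star_trivial]
      rw [Finset.sum_comm]
      refine Finset.sum_congr rfl fun k _ => Finset.sum_congr rfl fun l _ => ?_
      ring
    linarith
  obtain ⟨l, hl, hTl⟩ := neg_definite_bound T hTneg
  -- quadratic separation of the maximum
  obtain ⟨δ₁, hδ₁, hTay⟩ := taylor_second_order G a hGa (l / 4) (by positivity)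
  obtain ⟨ε, hε, hsep⟩ := quadratic_max_on_compact Δhat hcompact a (fun x => G x - G a)
    (hGc.sub continuousOn_const)
    (by
      intro x hx hxa
      have h1 := hMmax 0 x hx
      refine sub_neg.2 (lt_of_le_of_ne h1 fun h2 => hxa ?_)
      obtain ⟨j, hj⟩ := hMonly x hx (fun y hy => by rw [h2]; exact hMmax 0 y hy)
      rw [hj, Subsingleton.elim j 0])
    (l / 4) δ₁ (by positivity) hδ₁
    (by
      intro x hx
      have h1 := hTay (x - a) hx
      rw [add_sub_cancel, hcrit] at h1
      have h2 := (abs_le.1 h1).2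
      have h3 := hTl (x - a)
      simp only [zero_apply] at h2
      linarith)
  -- quadratic lower bound for `F`
  set U := fderiv ℝ (fderiv ℝ f) a with hU
  obtain ⟨δ₂, hδ₂, hTay2⟩ := taylor_second_order f a hfa 1 one_pos
  obtain ⟨A, hA, hlowf⟩ := quadratic_lower_on_compact Δhat hcompact a
    (fun x => f x - f a - fderiv ℝ f a (x - a))
    ((hfOn.continuousOn.sub continuousOn_const).sub (by fun_prop))
    (1 + ‖U‖) δ₂ (by positivity) hδ₂
    (by
      intro x hx
      have h1 := hTay2 (x - a) hx
      rw [add_sub_cancel] at h1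
      have h2 := (abs_le.1 h1).1
      have h3 : ‖U (x - a) (x - a)‖ ≤ ‖U‖ * ‖x - a‖ * ‖x - a‖ := U.le_opNorm₂ _ _
      rw [Real.norm_eq_abs] at h3
      have h4 := (abs_le.1 h3).1
      have h5 : 0 ≤ ‖U‖ * ‖x - a‖ * ‖x - a‖ := by positivity
      nlinarith)
  have hd0 : (0 : ℝ) < d + (d : ℝ) ^ 2 := by
    have : (1 : ℝ) ≤ d := by exact_mod_cast hd
    positivity
  have hcoord : ∀ m : Fin (d + 1) → ℝ, (∀ k, 0 ≤ m k) → ∑ k, m k = 1 →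
      ∃ x ∈ Δhat, s x = m := by
    intro m hm hm1
    refine ⟨fun k => m k.castSucc, ?_, snoc_init_of_sum m hm1⟩
    rw [hΔhat]
    refine ⟨fun k => hm _, ?_⟩
    rw [Fin.sum_univ_castSucc] at hm1
    have := hm (Fin.last d)
    linarith
  obtain ⟨C, hC0, hC⟩ := relEnt_gibbs_bounded F ρ hρpos hρ1 (ε / (d + (d : ℝ) ^ 2))
    (by positivity)
    (by
      intro m hm hm1
      obtain ⟨x, hx, rfl⟩ := hcoord m hm hm1
      have h1 := hsep x hx
      have h2 := sqDev_le_norm_sq x a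
      have h3 : ε / (d + (d : ℝ) ^ 2) * sqDev ρ (s x) ≤ ε * ‖x - a‖ ^ 2 := by
        rw [div_mul_eq_mul_div, div_le_iff₀ hd0]
        have := mul_le_mul_of_nonneg_left h2 hε.le
        calc _ ≤ _ := this
          _ = _ := by ring
      simp only [hGeq] at h1
      simp only [hf] at h1
      linarith)
    (Fin.snoc (fun k => fderiv ℝ f a (Pi.single k 1)) 0) A hA
    (by
      intro m hm hm1
      obtain ⟨x, hx, rfl⟩ := hcoord m hm hm1
      have h1 := hlowf x hx
      have h2 := mul_le_mul_of_nonneg_left (norm_sq_le_sqDev x a) hA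
      have h3 : ∑ k, (Fin.snoc (fun k => fderiv ℝ f a (Pi.single k 1)) 0 : Fin (d + 1) → ℝ) k *
          (s x k - ρ k) = fderiv ℝ f a (x - a) := by
        rw [Fin.sum_univ_castSucc]
        simp only [Fin.snoc_castSucc, Fin.snoc_last, zero_mul, add_zero, hρdef, hs]
        have hvs : x - a = ∑ k, (x - a) k • (Pi.single k 1 : Fin d → ℝ) := by
          simpa using (pi_eq_sum_univ' (x - a))
        conv_rhs => rw [hvs]
        simp only [map_sum, map_smul, smul_eq_mul, Pi.sub_apply]
        exact Finset.sum_congr rfl fun k _ => mul_comm _ _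
      rw [h3]
      simp only [hf] at h1
      linarith)
  refine ⟨2 * C + 1, by positivity, ?_⟩
  intro N k hk1 hk
  have hN : 1 ≤ N := hk1.trans hk
  have hZm : Z N = ∑ σ : Fin N → Fin (d + 1), Real.exp (N * F (mag σ)) := hZ N
  have hμm : μ N = fun σ : Fin N → Fin (d + 1) => Real.exp (N * F (mag σ)) /
      ∑ σ' : Fin N → Fin (d + 1), Real.exp (N * F (mag σ')) := by
    funext σ
    rw [hμ N σ, hZm]
    rfl
  have hZ0 : 0 < ∑ σ : Fin N → Fin (d + 1), Real.exp (N * F (mag σ)) :=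
    Finset.sum_pos (fun _ _ => Real.exp_pos _) Finset.univ_nonempty
  have hfin := relEnt_marginal_le hk1 hk ρ hρpos hρ1 (μ N)
    (by
      intro σ
      rw [hμm]
      exact div_pos (Real.exp_pos _) hZ0)
    (by
      rw [hμm, ← Finset.sum_div, div_self hZ0.ne'])
    (by
      intro g σ
      simp only [hμm, mag_comp_perm])
    C (by rw [hμm]; exact hC N hN) hC0
  rw [hρM]
  calc _ ≤ 2 * C * k / N := by
        convert hfin using 1
    _ ≤ (2 * C + 1) * k / N := by
        gcongr
        linarith
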